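/- Let γ : ℝ × [0,T) → ℝ² be a smooth family of closed regular plane curves satisfying the curve diffusion flow equation ∂_t γ = −κ_ss ν. Then the length L(t) = ∫₀^{2π} |∂_u γ(u,t)| du satisfies L'(t) = −∫₀^{2π} (κ_s)² |∂_u γ| du ≤ 0 for all t ∈ [0,T); in particular L is monotone nonincreasing. -/

import Mathlib

open Real MeasureTheory Filter

/-- Euclidean inner product on `ℝ × ℝ`. -/
def innerP (a b : ℝ × ℝ) : ℝ := a.1 * b.1 + a.2 * b.2

/-- Speed `|γ'|` of a plane curve in a general parametrisation. -/
noncomputable def speed (γ : ℝ → ℝ × ℝ) (u : ℝ) : ℝ :=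
  Real.sqrt ((deriv γ u).1 ^ 2 + (deriv γ u).2 ^ 2)

/-- Unit normal `ν = |γ'|⁻¹ (y', -x')`. -/
noncomputable def nuG (γ : ℝ → ℝ × ℝ) (u : ℝ) : ℝ × ℝ :=
  ((deriv γ u).2 / speed γ u, -(deriv γ u).1 / speed γ u)

/-- Arc-length derivative `∂_s = |γ'|⁻¹ ∂_u` of a scalar function. -/
noncomputable def arcD (γ : ℝ → ℝ × ℝ) (f : ℝ → ℝ) (u : ℝ) : ℝ :=
  (speed γ u)⁻¹ * deriv f u

/-- Arc-length derivative of a vector-valued function. -/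
noncomputable def arcDV (γ : ℝ → ℝ × ℝ) (F : ℝ → ℝ × ℝ) (u : ℝ) : ℝ × ℝ :=
  (speed γ u)⁻¹ • deriv F u

/-- Curvature `κ = ⟨∂_s² γ, ν⟩`. -/
noncomputable def curvG (γ : ℝ → ℝ × ℝ) (u : ℝ) : ℝ :=
  innerP (arcDV γ (arcDV γ γ) u) (nuG γ u)

/-- `κ_s`, the arc-length derivative of the curvature. -/
noncomputable def curvGS (γ : ℝ → ℝ × ℝ) (u : ℝ) : ℝ := arcD γ (curvG γ) u

/-- `κ_ss`, the second arc-length derivative of the curvature. -/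
noncomputable def curvGSS (γ : ℝ → ℝ × ℝ) (u : ℝ) : ℝ := arcD γ (curvGS γ) u

/-- Length of the closed curve `γ(·,t)` over one period `[0, 2π]`. -/
noncomputable def clen (γ : ℝ → ℝ → ℝ × ℝ) (t : ℝ) : ℝ :=
  ∫ u in (0:ℝ)..(2 * Real.pi), speed (fun u' => γ u' t) u

/-- Signed enclosed area `A(t) = (1/2) ∫₀^{2π} (x y_u − y x_u) du`. -/
noncomputable def signedArea (γ : ℝ → ℝ → ℝ × ℝ) (t : ℝ) : ℝ :=
  (1/2) * ∫ u in (0:ℝ)..(2 * Real.pi),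
    ((γ u t).1 * deriv (fun u' => (γ u' t).2) u - (γ u t).2 * deriv (fun u' => (γ u' t).1) u)

open scoped ContDiff

section Slices

variable {E : Type*} [NormedAddCommGroup E] [NormedSpace ℝ E] {f : ℝ × ℝ → E} {J : Set ℝ}

theorem hasDerivAt_slice_fst (hf : ContDiffOn ℝ ∞ f (Set.univ ×ˢ J)) (u : ℝ) {t : ℝ}
    (ht : t ∈ J) :
    HasDerivAt (fun u' => f (u', t)) (fderivWithin ℝ f (Set.univ ×ˢ J) (u, t) (1, 0)) u := by
  have h := (hf.differentiableOn (by simp) (u, t) ⟨trivial, ht⟩).hasFDerivWithinAt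
  have hc : HasDerivWithinAt (fun u' : ℝ => (u', t)) ((1 : ℝ), (0 : ℝ)) Set.univ u :=
    ((hasDerivAt_id u).prodMk (hasDerivAt_const u t)).hasDerivWithinAt
  exact hasDerivWithinAt_univ.1
    (h.comp_hasDerivWithinAt (x := u) (f := fun u' : ℝ => (u', t)) hc fun _ _ => ⟨trivial, ht⟩)

theorem hasDerivWithinAt_slice_snd (hf : ContDiffOn ℝ ∞ f (Set.univ ×ˢ J)) (u : ℝ) {t : ℝ}
    (ht : t ∈ J) :
    HasDerivWithinAt (fun t' => f (u, t')) (fderivWithin ℝ f (Set.univ ×ˢ J) (u, t) (0, 1)) J t := by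
  have h := (hf.differentiableOn (by simp) (u, t) ⟨trivial, ht⟩).hasFDerivWithinAt
  have hc : HasDerivWithinAt (fun t' : ℝ => (u, t')) ((0 : ℝ), (1 : ℝ)) J t :=
    ((hasDerivAt_const t u).prodMk (hasDerivAt_id t)).hasDerivWithinAt
  exact h.comp_hasDerivWithinAt (x := t) (f := fun t' : ℝ => (u, t')) hc fun _ h' => ⟨trivial, h'⟩

theorem contDiffOn_fderivWithin_prod_apply (hJ : UniqueDiffOn ℝ J)
    (hf : ContDiffOn ℝ ∞ f (Set.univ ×ˢ J)) (w : ℝ × ℝ) :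
    ContDiffOn ℝ ∞ (fun p => fderivWithin ℝ f (Set.univ ×ˢ J) p w) (Set.univ ×ˢ J) :=
  (hf.fderivWithin (uniqueDiffOn_univ.prod hJ) (by simp)).clm_apply contDiffOn_const

theorem contDiffOn_deriv_slice_fst (hJ : UniqueDiffOn ℝ J)
    (hf : ContDiffOn ℝ ∞ f (Set.univ ×ˢ J)) :
    ContDiffOn ℝ ∞ (fun p : ℝ × ℝ => deriv (fun u => f (u, p.2)) p.1) (Set.univ ×ˢ J) :=
  (contDiffOn_fderivWithin_prod_apply hJ hf (1, 0)).congr fun p hp =>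
    (hasDerivAt_slice_fst hf p.1 hp.2).deriv

/-- The mixed partial derivatives commute. -/
theorem hasDerivWithinAt_deriv_slice_fst (hJ : UniqueDiffOn ℝ J) (hJ' : J ⊆ closure (interior J))
    (hf : ContDiffOn ℝ ∞ f (Set.univ ×ˢ J)) (u : ℝ) {t : ℝ} (ht : t ∈ J) :
    HasDerivWithinAt (fun t' => deriv (fun u' => f (u', t')) u)
      (deriv (fun u' => derivWithin (fun t' => f (u', t')) J t) u) J t := by
  have hS : UniqueDiffOn ℝ (Set.univ ×ˢ J : Set (ℝ × ℝ)) := uniqueDiffOn_univ.prod hJ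
  have hm : ((u, t) : ℝ × ℝ) ∈ (Set.univ ×ˢ J : Set (ℝ × ℝ)) := ⟨trivial, ht⟩
  have hd : DifferentiableWithinAt ℝ (fderivWithin ℝ f (Set.univ ×ˢ J)) (Set.univ ×ˢ J) (u, t) :=
    (hf.fderivWithin hS (m := ∞) (by simp)).differentiableOn (by simp) _ hm
  have happ : ∀ v w : ℝ × ℝ,
      fderivWithin ℝ (fun p => fderivWithin ℝ f (Set.univ ×ˢ J) p w) (Set.univ ×ˢ J) (u, t) v
        = fderivWithin ℝ (fderivWithin ℝ f (Set.univ ×ˢ J)) (Set.univ ×ˢ J) (u, t) v w := by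
    intro v w
    rw [fderivWithin_clm_apply (hS _ hm) hd (differentiableWithinAt_const w)]
    simp
  have hsym := (hf (u, t) hm).isSymmSndFDerivWithinAt
    (by simpa using WithTop.coe_le_coe.2 (le_top : (2 : ℕ∞) ≤ ⊤)) hS
    (by simpa [interior_prod_eq, closure_prod_eq] using hJ' ht) hm
  have h1 := hasDerivWithinAt_slice_snd (contDiffOn_fderivWithin_prod_apply hJ hf (1, 0)) u ht
  have h2 := hasDerivAt_slice_fst (contDiffOn_fderivWithin_prod_apply hJ hf (0, 1)) u ht
  have e : (fun u' => derivWithin (fun t' => f (u', t')) J t)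
      = fun u' => fderivWithin ℝ f (Set.univ ×ˢ J) (u', t) (0, 1) :=
    funext fun u' => (hasDerivWithinAt_slice_snd hf u' ht).derivWithin (hJ t ht)
  rw [e, h2.deriv, happ, ← hsym.eq, ← happ]
  exact h1.congr (fun t' h' => (hasDerivAt_slice_fst hf u h').deriv)
    (hasDerivAt_slice_fst hf u ht).deriv

end Slices

/-- Differentiation under the integral sign, one-sided at the left endpoint of the time interval. -/
theorem hasDerivWithinAt_integral_Ico {f f' : ℝ × ℝ → ℝ} {T a b : ℝ}
    (hf : ContinuousOn f (Set.univ ×ˢ Set.Ico 0 T))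
    (hf' : ContinuousOn f' (Set.univ ×ˢ Set.Ico 0 T))
    (hd : ∀ u, ∀ t ∈ Set.Ico 0 T,
      HasDerivWithinAt (fun t' => f (u, t')) (f' (u, t)) (Set.Ico 0 T) t)
    {t : ℝ} (ht : t ∈ Set.Ico 0 T) :
    HasDerivWithinAt (fun t' => ∫ u in a..b, f (u, t')) (∫ u in a..b, f' (u, t))
      (Set.Ico 0 T) t := by
  obtain ⟨R, htR, hRT⟩ := exists_between ht.2
  have hR : 0 ≤ R := ht.1.trans htR.le
  -- Freezing the time variable outside `[0, R]` gives a globally continuous integrand.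
  let clamp : ℝ → ℝ := fun τ => max 0 (min τ R)
  have hclamp : ∀ τ ∈ Set.Icc 0 R, clamp τ = τ := fun τ hτ => by
    simp only [clamp, min_eq_left hτ.2, max_eq_right hτ.1]
  have hmem : ∀ τ, clamp τ ∈ Set.Ico 0 T := fun τ =>
    ⟨le_max_left _ _, max_lt (hR.trans_lt hRT) ((min_le_right _ _).trans_lt hRT)⟩
  have hg : Continuous (fun p : ℝ × ℝ => f' (p.2, clamp p.1)) :=
    hf'.comp_continuous (by fun_prop) fun p => ⟨trivial, hmem p.1⟩
  let G : ℝ → ℝ := fun τ => ∫ u in a..b, f' (u, clamp τ)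
  have hG : Continuous G :=
    intervalIntegral.continuous_parametric_intervalIntegral_of_continuous' (μ := volume)
      (f := fun τ u => f' (u, clamp τ)) hg a b
  have hslice : ∀ τ ∈ Set.Ico 0 T, Continuous fun u => f (u, τ) := fun τ hτ =>
    hf.comp_continuous (by fun_prop) fun _ => ⟨trivial, hτ⟩
  have hFTC : ∀ τ ∈ Set.Icc 0 R,
      ∫ u in a..b, f (u, τ) = (∫ u in a..b, f (u, 0)) + ∫ σ in (0 : ℝ)..τ, G σ := by
    intro τ hτ
    have hpt : ∀ u, ∫ σ in (0 : ℝ)..τ, f' (u, clamp σ) = f (u, τ) - f (u, 0) := by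
      intro u
      refine intervalIntegral.integral_eq_sub_of_hasDerivAt_of_le hτ.1 (f := fun σ => f (u, σ))
        ?_ ?_ (Continuous.intervalIntegrable (hg.comp (by fun_prop : Continuous fun σ => (σ, u))) _ _)
      · exact hf.comp (by fun_prop) fun σ hσ =>
          ⟨trivial, hσ.1, hσ.2.trans_lt (hτ.2.trans_lt hRT)⟩
      · intro σ hσ
        have hσR : σ < R := hσ.2.trans_le hτ.2
        rw [hclamp σ ⟨hσ.1.le, hσR.le⟩]
        exact (hd u σ ⟨hσ.1.le, hσR.trans hRT⟩).hasDerivAt (Ico_mem_nhds hσ.1 (hσR.trans hRT))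
    have hswap : ∫ σ in (0 : ℝ)..τ, G σ = ∫ u in a..b, ∫ σ in (0 : ℝ)..τ, f' (u, clamp σ) :=
      intervalIntegral_intervalIntegral_swap
        ((hg.continuousOn.integrableOn_compact (isCompact_uIcc.prod isCompact_uIcc)).mono_set
          (Set.prod_mono Set.uIoc_subset_uIcc Set.uIoc_subset_uIcc))
    rw [hswap, intervalIntegral.integral_congr fun u _ => hpt u,
      intervalIntegral.integral_sub ((hslice τ ⟨hτ.1, hτ.2.trans_lt hRT⟩).intervalIntegrable _ _)
        ((hslice 0 ⟨le_rfl, hR.trans_lt hRT⟩).intervalIntegrable _ _)]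
    ring
  have hderiv : HasDerivAt (fun τ => (∫ u in a..b, f (u, 0)) + ∫ σ in (0 : ℝ)..τ, G σ)
      (∫ u in a..b, f' (u, t)) t := by
    have h := (hG.integral_hasStrictDerivAt 0 t).hasDerivAt.const_add (∫ u in a..b, f (u, 0))
    simpa only [G, hclamp t ⟨ht.1, htR.le⟩] using h
  refine hderiv.hasDerivWithinAt.congr_of_eventuallyEq ?_ (hFTC t ⟨ht.1, htR.le⟩)
  filter_upwards [self_mem_nhdsWithin, mem_nhdsWithin_of_mem_nhds (Iio_mem_nhds htR)] with τ h1 h2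
  exact hFTC τ ⟨h1.1, h2.le⟩

section SingleCurve

variable {c : ℝ → ℝ × ℝ} {u : ℝ}

theorem sq_add_sq_pos_of_ne_zero {a : ℝ × ℝ} (ha : a ≠ 0) : 0 < a.1 ^ 2 + a.2 ^ 2 := by
  by_contra! h
  refine ha (Prod.ext ?_ ?_) <;>
    exact pow_eq_zero_iff two_ne_zero |>.1 (le_antisymm (by nlinarith [sq_nonneg a.1, sq_nonneg a.2])
      (sq_nonneg _))

theorem speed_pos (h : deriv c u ≠ 0) : 0 < speed c u :=
  Real.sqrt_pos.2 (sq_add_sq_pos_of_ne_zero h)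

theorem nuG_eq_rotate_arcDV (c : ℝ → ℝ × ℝ) (u : ℝ) :
    nuG c u = ((arcDV c c u).2, -(arcDV c c u).1) := by
  simp only [nuG, arcDV, Prod.smul_fst, Prod.smul_snd, smul_eq_mul, div_eq_inv_mul, mul_neg]

/-- First variation of the length element under a normal velocity `φ ν`. -/
theorem innerP_arcDV_deriv_smul_nuG {φ : ℝ → ℝ} (hreg : deriv c u ≠ 0)
    (hτ : DifferentiableAt ℝ (arcDV c c) u) (hφ : DifferentiableAt ℝ φ u) :
    innerP (arcDV c c u) (deriv (fun u' => φ u' • nuG c u') u)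
      = -(φ u * curvG c u * speed c u) := by
  have h1 : HasDerivAt (fun u' => (arcDV c c u').1) (deriv (arcDV c c) u).1 u :=
    (hasFDerivAt_fst (𝕜 := ℝ) (E := ℝ) (F := ℝ)).comp_hasDerivAt u hτ.hasDerivAt
  have h2 : HasDerivAt (fun u' => (arcDV c c u').2) (deriv (arcDV c c) u).2 u :=
    (hasFDerivAt_snd (𝕜 := ℝ) (E := ℝ) (F := ℝ)).comp_hasDerivAt u hτ.hasDerivAt
  have hν : HasDerivAt (nuG c) ((deriv (arcDV c c) u).2, -(deriv (arcDV c c) u).1) u := by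
    rw [funext (nuG_eq_rotate_arcDV c)]
    exact h2.prodMk h1.neg
  have hv := (speed_pos hreg).ne'
  rw [(hφ.hasDerivAt.fun_smul hν).deriv, curvG, nuG_eq_rotate_arcDV]
  rw [arcDV.eq_def c (arcDV c c)]
  simp only [innerP, Prod.fst_add, Prod.snd_add, Prod.smul_fst, Prod.smul_snd, smul_eq_mul]
  field_simp
  ring

theorem Function.Periodic.deriv_periodic {E : Type*} [NormedAddCommGroup E] [NormedSpace ℝ E]
    {f : ℝ → E} {P : ℝ} (hf : Function.Periodic f P) : Function.Periodic (deriv f) P := fun x => by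
  rw [← deriv_comp_add_const, funext hf]

theorem speed_periodic {P : ℝ} (hc : Function.Periodic c P) : Function.Periodic (speed c) P :=
  fun x => by simp only [speed, hc.deriv_periodic x]

theorem curvG_periodic {P : ℝ} (hc : Function.Periodic c P) : Function.Periodic (curvG c) P := by
  have hτ : Function.Periodic (arcDV c c) P := fun x => by
    simp only [arcDV, speed_periodic hc x, hc.deriv_periodic x]
  intro x
  simp only [curvG, nuG_eq_rotate_arcDV, arcDV.eq_def c (arcDV c c), speed_periodic hc x,
    hτ.deriv_periodic x, hτ x]

theorem curvGS_periodic {P : ℝ} (hc : Function.Periodic c P) : Function.Periodic (curvGS c) P :=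
  fun x => by
    simp only [curvGS, arcD, speed_periodic hc x, (curvG_periodic hc).deriv_periodic x]

/-- Integration by parts along a closed curve: `∫ κ κ_ss ds = - ∫ κ_s² ds`. -/
theorem integral_curvGSS_mul_curvG {P : ℝ} (hc : Function.Periodic c P)
    (hreg : ∀ u, deriv c u ≠ 0) (hκ : ContDiff ℝ 1 (curvG c)) (hκs : ContDiff ℝ 1 (curvGS c)) :
    ∫ u in (0 : ℝ)..P, curvGSS c u * curvG c u * speed c u
      = -∫ u in (0 : ℝ)..P, curvGS c u ^ 2 * speed c u := by
  have hv : ∀ u, speed c u ≠ 0 := fun u => (speed_pos (hreg u)).ne'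
  have hl : ∀ u, curvGSS c u * curvG c u * speed c u = curvG c u * deriv (curvGS c) u := fun u => by
    have := hv u
    simp only [curvGSS, arcD]
    field_simp
  have hr : ∀ u, curvGS c u ^ 2 * speed c u = deriv (curvG c) u * curvGS c u := fun u => by
    have := hv u
    simp only [curvGS, arcD]
    field_simp
  simp only [hl, hr]
  rw [intervalIntegral.integral_mul_deriv_eq_deriv_mul
    (fun x _ => (hκ.differentiable (by simp) x).hasDerivAt)
    (fun x _ => (hκs.differentiable (by simp) x).hasDerivAt)
    ((hκ.continuous_deriv le_rfl).intervalIntegrable _ _)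
    ((hκs.continuous_deriv le_rfl).intervalIntegrable _ _),
    (curvG_periodic hc).eq, (curvGS_periodic hc).eq]
  ring

end SingleCurve

section Family

variable {γ : ℝ → ℝ → ℝ × ℝ} {J : Set ℝ}

theorem contDiffOn_speed (hJ : UniqueDiffOn ℝ J)
    (hγ : ContDiffOn ℝ ∞ (fun p : ℝ × ℝ => γ p.1 p.2) (Set.univ ×ˢ J))
    (hreg : ∀ u, ∀ t ∈ J, deriv (fun u' => γ u' t) u ≠ 0) :
    ContDiffOn ℝ ∞ (fun p : ℝ × ℝ => speed (fun u' => γ u' p.2) p.1) (Set.univ ×ˢ J) := by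
  have h := contDiffOn_deriv_slice_fst hJ hγ
  exact ((h.fst.pow 2).add (h.snd.pow 2)).sqrt fun p hp =>
    (sq_add_sq_pos_of_ne_zero (hreg p.1 p.2 hp.2)).ne'

theorem contDiffOn_arcDV (hJ : UniqueDiffOn ℝ J)
    (hγ : ContDiffOn ℝ ∞ (fun p : ℝ × ℝ => γ p.1 p.2) (Set.univ ×ˢ J))
    (hreg : ∀ u, ∀ t ∈ J, deriv (fun u' => γ u' t) u ≠ 0) {F : ℝ × ℝ → ℝ × ℝ}
    (hF : ContDiffOn ℝ ∞ F (Set.univ ×ˢ J)) :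
    ContDiffOn ℝ ∞ (fun p : ℝ × ℝ => arcDV (fun u' => γ u' p.2) (fun u' => F (u', p.2)) p.1)
      (Set.univ ×ˢ J) :=
  ((contDiffOn_speed hJ hγ hreg).inv fun p hp => (speed_pos (hreg p.1 p.2 hp.2)).ne').smul
    (contDiffOn_deriv_slice_fst hJ hF)

theorem contDiffOn_arcD (hJ : UniqueDiffOn ℝ J)
    (hγ : ContDiffOn ℝ ∞ (fun p : ℝ × ℝ => γ p.1 p.2) (Set.univ ×ˢ J))
    (hreg : ∀ u, ∀ t ∈ J, deriv (fun u' => γ u' t) u ≠ 0) {f : ℝ × ℝ → ℝ}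
    (hf : ContDiffOn ℝ ∞ f (Set.univ ×ˢ J)) :
    ContDiffOn ℝ ∞ (fun p : ℝ × ℝ => arcD (fun u' => γ u' p.2) (fun u' => f (u', p.2)) p.1)
      (Set.univ ×ˢ J) :=
  ((contDiffOn_speed hJ hγ hreg).inv fun p hp => (speed_pos (hreg p.1 p.2 hp.2)).ne').mul
    (contDiffOn_deriv_slice_fst hJ hf)

theorem contDiffOn_nuG (hJ : UniqueDiffOn ℝ J)
    (hγ : ContDiffOn ℝ ∞ (fun p : ℝ × ℝ => γ p.1 p.2) (Set.univ ×ˢ J))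
    (hreg : ∀ u, ∀ t ∈ J, deriv (fun u' => γ u' t) u ≠ 0) :
    ContDiffOn ℝ ∞ (fun p : ℝ × ℝ => nuG (fun u' => γ u' p.2) p.1) (Set.univ ×ˢ J) := by
  have h := contDiffOn_arcDV hJ hγ hreg hγ
  simp only [nuG_eq_rotate_arcDV]
  exact h.snd.prodMk h.fst.neg

theorem contDiffOn_curvG (hJ : UniqueDiffOn ℝ J)
    (hγ : ContDiffOn ℝ ∞ (fun p : ℝ × ℝ => γ p.1 p.2) (Set.univ ×ˢ J))
    (hreg : ∀ u, ∀ t ∈ J, deriv (fun u' => γ u' t) u ≠ 0) :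
    ContDiffOn ℝ ∞ (fun p : ℝ × ℝ => curvG (fun u' => γ u' p.2) p.1) (Set.univ ×ˢ J) := by
  have h := contDiffOn_arcDV hJ hγ hreg (contDiffOn_arcDV hJ hγ hreg hγ)
  have hν := contDiffOn_nuG hJ hγ hreg
  exact (h.fst.mul hν.fst).add (h.snd.mul hν.snd)

theorem contDiffOn_curvGS (hJ : UniqueDiffOn ℝ J)
    (hγ : ContDiffOn ℝ ∞ (fun p : ℝ × ℝ => γ p.1 p.2) (Set.univ ×ˢ J))
    (hreg : ∀ u, ∀ t ∈ J, deriv (fun u' => γ u' t) u ≠ 0) :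
    ContDiffOn ℝ ∞ (fun p : ℝ × ℝ => curvGS (fun u' => γ u' p.2) p.1) (Set.univ ×ˢ J) :=
  contDiffOn_arcD hJ hγ hreg (contDiffOn_curvG hJ hγ hreg)

theorem contDiffOn_curvGSS (hJ : UniqueDiffOn ℝ J)
    (hγ : ContDiffOn ℝ ∞ (fun p : ℝ × ℝ => γ p.1 p.2) (Set.univ ×ˢ J))
    (hreg : ∀ u, ∀ t ∈ J, deriv (fun u' => γ u' t) u ≠ 0) :
    ContDiffOn ℝ ∞ (fun p : ℝ × ℝ => curvGSS (fun u' => γ u' p.2) p.1) (Set.univ ×ˢ J) :=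
  contDiffOn_arcD hJ hγ hreg (contDiffOn_curvGS hJ hγ hreg)

theorem contDiff_slice_fst {E : Type*} [NormedAddCommGroup E] [NormedSpace ℝ E] {f : ℝ × ℝ → E}
    (hf : ContDiffOn ℝ ∞ f (Set.univ ×ˢ J)) {t : ℝ} (ht : t ∈ J) :
    ContDiff ℝ ∞ fun u => f (u, t) :=
  hf.comp_contDiff (contDiff_id.prodMk contDiff_const) fun _ => ⟨trivial, ht⟩

/-- Time derivative of the speed, through the `u`-derivative of the velocity. -/
theorem hasDerivWithinAt_speed (hJ : UniqueDiffOn ℝ J) (hJ' : J ⊆ closure (interior J))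
    (hγ : ContDiffOn ℝ ∞ (fun p : ℝ × ℝ => γ p.1 p.2) (Set.univ ×ˢ J))
    (hreg : ∀ u, ∀ t ∈ J, deriv (fun u' => γ u' t) u ≠ 0) (u : ℝ) {t : ℝ} (ht : t ∈ J) :
    HasDerivWithinAt (fun t' => speed (fun u' => γ u' t') u)
      (innerP (arcDV (fun u' => γ u' t) (fun u' => γ u' t) u)
        (deriv (fun u' => derivWithin (γ u') J t) u)) J t := by
  have h := hasDerivWithinAt_deriv_slice_fst hJ hJ' hγ u ht
  have h1 := (hasFDerivAt_fst (𝕜 := ℝ) (E := ℝ) (F := ℝ)).comp_hasDerivWithinAt t h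
  have h2 := (hasFDerivAt_snd (𝕜 := ℝ) (E := ℝ) (F := ℝ)).comp_hasDerivWithinAt t h
  have hs := ((h1.fun_pow 2).fun_add (h2.fun_pow 2)).sqrt
    (sq_add_sq_pos_of_ne_zero (hreg u t ht)).ne'
  refine hs.congr_deriv ?_
  have hv := (speed_pos (hreg u t ht)).ne'
  simp only [innerP, arcDV, Prod.smul_fst, Prod.smul_snd, smul_eq_mul, Function.comp_apply,
    ContinuousLinearMap.coe_fst', ContinuousLinearMap.coe_snd']
  change _ / (2 * speed (fun u' => γ u' t) u) = _
  field_simp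
  ring

end Family

/-- By continuity the flow equation holds at the initial time with the one-sided derivative. -/
theorem derivWithin_eq_of_flow {T : ℝ} (hT : 0 < T) {γ : ℝ → ℝ → ℝ × ℝ}
    (hγ : ContDiffOn ℝ ∞ (fun p : ℝ × ℝ => γ p.1 p.2) (Set.univ ×ˢ Set.Ico 0 T))
    {V : ℝ × ℝ → ℝ × ℝ} (hV : ContinuousOn V (Set.univ ×ˢ Set.Ico 0 T))
    (hflow : ∀ u, ∀ t ∈ Set.Ioo 0 T, deriv (γ u) t = V (u, t)) (u : ℝ) {t : ℝ}
    (ht : t ∈ Set.Ico 0 T) : derivWithin (γ u) (Set.Ico 0 T) t = V (u, t) := by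
  have hJ := uniqueDiffOn_Ico (0 : ℝ) T
  have hmaps : Set.MapsTo (fun t' : ℝ => (u, t')) (Set.Ico 0 T) (Set.univ ×ˢ Set.Ico 0 T) :=
    fun _ h => ⟨trivial, h⟩
  have hl : ContinuousOn (derivWithin (γ u) (Set.Ico 0 T)) (Set.Ico 0 T) :=
    ((contDiffOn_fderivWithin_prod_apply hJ hγ (0, 1)).continuousOn.comp
      (by fun_prop) hmaps).congr fun t' h' =>
        (hasDerivWithinAt_slice_snd hγ u h').derivWithin (hJ t' h')
  have hr : ContinuousOn (fun t' => V (u, t')) (Set.Ico 0 T) := hV.comp (by fun_prop) hmaps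
  have heq : Set.EqOn (derivWithin (γ u) (Set.Ico 0 T)) (fun t' => V (u, t')) (Set.Ioo 0 T) :=
    fun t' h' => (derivWithin_of_mem_nhds (Ico_mem_nhds h'.1 h'.2)).trans (hflow u t' h')
  exact heq.of_subset_closure hl hr Set.Ioo_subset_Ico_self
    (by rw [closure_Ioo hT.ne]; exact Set.Ico_subset_Icc_self) ht

/-- under the curve diffusion flow `∂_t γ = −κ_ss ν` of closed plane curves,
the length satisfies `L'(t) = −∫ κ_s² dℓ ≤ 0`; in particular `L` is monotone nonincreasing. -/
theorem curve_diffusion_length_nonincreasing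
    (T : ℝ) (hT : 0 < T) (γ : ℝ → ℝ → ℝ × ℝ)
    (hsmooth : ContDiffOn ℝ (⊤ : ℕ∞) (fun p : ℝ × ℝ => γ p.1 p.2) (Set.univ ×ˢ Set.Ico 0 T))
    (hper : ∀ u : ℝ, ∀ t ∈ Set.Ico (0:ℝ) T, γ (u + 2 * Real.pi) t = γ u t)
    (hreg : ∀ u : ℝ, ∀ t ∈ Set.Ico (0:ℝ) T, deriv (fun u' => γ u' t) u ≠ 0)
    (hflow : ∀ u : ℝ, ∀ t ∈ Set.Ico (0:ℝ) T,
      deriv (fun t' => γ u t') t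
        = (- curvGSS (fun u' => γ u' t) u) • nuG (fun u' => γ u' t) u) :
    (∀ t ∈ Set.Ico (0:ℝ) T,
        HasDerivWithinAt (clen γ)
          (- ∫ u in (0:ℝ)..(2 * Real.pi),
              (curvGS (fun u' => γ u' t) u) ^ 2 * speed (fun u' => γ u' t) u)
          (Set.Ico 0 T) t ∧
        (- ∫ u in (0:ℝ)..(2 * Real.pi),
              (curvGS (fun u' => γ u' t) u) ^ 2 * speed (fun u' => γ u' t) u) ≤ 0) ∧
      AntitoneOn (clen γ) (Set.Ico 0 T) := by
  have hJ := uniqueDiffOn_Ico (0 : ℝ) T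
  have hJ' : Set.Ico 0 T ⊆ closure (interior (Set.Ico 0 T)) := by
    rw [interior_Ico, closure_Ioo hT.ne]
    exact Set.Ico_subset_Icc_self
  have hκs := contDiffOn_curvGS hJ hsmooth hreg
  have hκss := contDiffOn_curvGSS hJ hsmooth hreg
  have hvel : ∀ t ∈ Set.Ico 0 T, (fun u => derivWithin (γ u) (Set.Ico 0 T) t)
      = fun u => (-curvGSS (fun u' => γ u' t) u) • nuG (fun u' => γ u' t) u := fun t ht =>
    funext fun u => derivWithin_eq_of_flow hT hsmooth
      (V := fun p => (-curvGSS (fun u' => γ u' p.2) p.1) • nuG (fun u' => γ u' p.2) p.1)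
      (hκss.neg.smul (contDiffOn_nuG hJ hsmooth hreg)).continuousOn
      (fun u t ht => hflow u t ⟨ht.1.le, ht.2⟩) u ht
  have hspeed : ∀ u, ∀ t ∈ Set.Ico 0 T,
      HasDerivWithinAt (fun t' => speed (fun u' => γ u' t') u)
        (curvGSS (fun u' => γ u' t) u * curvG (fun u' => γ u' t) u * speed (fun u' => γ u' t) u)
        (Set.Ico 0 T) t := by
    intro u t ht
    refine (hasDerivWithinAt_speed hJ hJ' hsmooth hreg u ht).congr_deriv ?_
    rw [hvel t ht, innerP_arcDV_deriv_smul_nuG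
      (φ := fun u' => -curvGSS (fun u'' => γ u'' t) u') (hreg u t ht)
      ((contDiff_slice_fst (contDiffOn_arcDV hJ hsmooth hreg hsmooth) ht).differentiable
        (by simp) u)
      ((contDiff_slice_fst hκss ht).differentiable (by simp) u).neg]
    ring
  have hderiv : ∀ t ∈ Set.Ico 0 T, HasDerivWithinAt (clen γ)
      (-∫ u in (0 : ℝ)..(2 * Real.pi),
        (curvGS (fun u' => γ u' t) u) ^ 2 * speed (fun u' => γ u' t) u) (Set.Ico 0 T) t := by
    intro t ht
    rw [← integral_curvGSS_mul_curvG (fun u => hper u t ht) (fun u => hreg u t ht)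
      ((contDiff_slice_fst (contDiffOn_curvG hJ hsmooth hreg) ht).of_le (by simp))
      ((contDiff_slice_fst hκs ht).of_le (by simp))]
    exact hasDerivWithinAt_integral_Ico (contDiffOn_speed hJ hsmooth hreg).continuousOn
      ((hκss.mul (contDiffOn_curvG hJ hsmooth hreg)).mul
        (contDiffOn_speed hJ hsmooth hreg)).continuousOn hspeed ht
  have hnonpos : ∀ t, (-∫ u in (0 : ℝ)..(2 * Real.pi),
      (curvGS (fun u' => γ u' t) u) ^ 2 * speed (fun u' => γ u' t) u) ≤ 0 := fun t =>
    neg_nonpos.2 (intervalIntegral.integral_nonneg (by positivity) fun u _ =>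
      mul_nonneg (sq_nonneg _) (Real.sqrt_nonneg _))
  refine ⟨fun t ht => ⟨hderiv t ht, hnonpos t⟩, ?_⟩
  exact antitoneOn_of_hasDerivWithinAt_nonpos (convex_Ico 0 T)
    (fun t ht => (hderiv t ht).continuousWithinAt)
    (fun t ht => (hderiv t (interior_subset ht)).mono interior_subset) fun t _ => hnonpos t
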